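/- Let p ∈ {3,5}, let k ≥ 2 and let 0 ≤ a, b ≤ p−1 be integers. If either (a = 1 and b + k ≡ 3 (mod p−1)) or (a = 2 and b + k ≡ 2 (mod p−1)), then for all integers n ≥ 0 one has τ(n) ≡ c_{k,a,b,n} (mod p), i.e. the n-th Fourier coefficient of Δ is congruent modulo p to the n-th Fourier coefficient of the Eisenstein series E_{k,ω_p^a,ω_p^b}. -/

import Mathlib

noncomputable section

/-- The Ramanujan tau function `τ(n)`: the `n`-th coefficient of the `q`-expansion
`q ∏_{m ≥ 1} (1 - q^m)²⁴` of `Δ` (the product may be truncated at `m = n` without changing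
the `n`-th coefficient). -/
def ramanujanTau (n : ℕ) : ℤ :=
  (Polynomial.X * ∏ m ∈ Finset.Icc 1 n, (1 - Polynomial.X ^ m) ^ 24 : Polynomial ℤ).coeff n

/-- The `n`-th Fourier coefficient `c_{k,a,b,n} = ∑_{d ∣ n} ω_p^a(n/d) ω_p^b(d) d^{k-1}` of the
Eisenstein series `E_{k, ω_p^a, ω_p^b}`, where `ω : ℤ → ℤ_[p]` is the Teichmüller character
mod `p`.  (For `n = 0` the sum is empty, giving constant term `0`, as is the case whenever
the first character is nontrivial.) -/
def eisCoeff (p : ℕ) [Fact p.Prime] (ω : ℤ → ℤ_[p]) (k a b : ℕ) (n : ℕ) : ℤ_[p] :=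
  ∑ d ∈ n.divisors, ω ((n / d : ℕ) : ℤ) ^ a * ω (d : ℤ) ^ b * (d : ℤ_[p]) ^ (k - 1)

end

/-! The second Rankin–Cohen bracket `4 E₄ D²E₄ - 5 (DE₄)²` of `E₄` with itself is a cusp form of
weight 12, hence equals `960 Δ`. Writing `E₄ = 1 + 240 S` with `S = ∑ σ₃(n) qⁿ`, this is
van der Pol's identity `Δ = D²S + 60 (4 S D²S - 5 (DS)²)`, so `τ(n) ≡ n² σ₃(n)` modulo `60`. For
`p ∈ {2, 3, 5}` every `x : ZMod p` satisfies `x⁵ = x`, whence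
`n² σ₃(n) = ∑ (n/d)² d⁵ = ∑ (n/d)² d = n σ₁(n)` in `ZMod p`. By Fermat's little theorem the
Eisenstein coefficient reduces to `∑ (n/d) d²` or to `∑ (n/d)² d`, both equal to `n σ₁(n)`. -/

noncomputable section

open Complex Filter Function Topology
open UpperHalfPlane hiding I
open Derivative ModularForm PowerSeries
open scoped MatrixGroups Manifold ModularForm ArithmeticFunction.sigma

section FactorsThroughQParam

variable {h : ℝ} {g : ℍ → ℂ} {G : ℂ → ℂ}

lemma periodic_qParam (hh : h ≠ 0) : Periodic (Periodic.qParam h) h := fun w ↦ by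
  have : (h : ℂ) ≠ 0 := mod_cast hh
  rw [Periodic.qParam, mul_add, add_div, mul_div_cancel_right₀ _ this, exp_periodic,
    Periodic.qParam]

lemma periodic_comp_ofComplex_of_eq_qParam (hh : h ≠ 0)
    (hg : ∀ z : ℍ, g z = G (Periodic.qParam h z)) : Periodic (g ∘ ofComplex) h := by
  intro w
  by_cases hw : 0 < w.im
  · have hw' : 0 < (w + h).im := by simpa using hw
    simp only [comp_apply, hg, ofComplex_apply_of_im_pos hw, ofComplex_apply_of_im_pos hw']
    exact congrArg G (periodic_qParam hh w)
  · have hw' : (w + h).im ≤ 0 := by simpa using hw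
    simp only [comp_apply, ofComplex_apply_of_im_nonpos (not_lt.mp hw),
      ofComplex_apply_of_im_nonpos hw']

lemma tendsto_atImInfty_of_eq_qParam (hh : 0 < h) (hG : ContinuousAt G 0)
    (hg : ∀ z : ℍ, g z = G (Periodic.qParam h z)) : Tendsto g atImInfty (𝓝 (G 0)) :=
  (hG.tendsto.comp (qParam_tendsto_atImInfty hh)).congr fun z ↦ (hg z).symm

lemma cuspFunction_eventuallyEq_of_eq_qParam (hh : 0 < h) (hG : ContinuousAt G 0)
    (hg : ∀ z : ℍ, g z = G (Periodic.qParam h z)) : cuspFunction h g =ᶠ[𝓝 0] G := by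
  have h_ne : cuspFunction h g =ᶠ[𝓝[≠] 0] G := by
    filter_upwards [self_mem_nhdsWithin, nhdsWithin_le_nhds (Metric.ball_mem_nhds 0 one_pos)]
      with q hq0 hq1
    have him := Periodic.im_invQParam_pos_of_norm_lt_one hh (by simpa using hq1) hq0
    rw [cuspFunction, Periodic.cuspFunction_eq_of_nonzero h _ hq0, comp_apply,
      ofComplex_apply_of_im_pos him, hg, coe_mk, Periodic.qParam_right_inv hh.ne' hq0]
  refine eventuallyEq_nhds_of_eventuallyEq_nhdsNE h_ne ?_
  rw [cuspFunction, Periodic.cuspFunction_zero_eq_limUnder_nhds_ne]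
  exact ((hG.tendsto.mono_left nhdsWithin_le_nhds).congr' h_ne.symm).limUnder_eq

end FactorsThroughQParam

section NormalizedDeriv

/-- The function `f` on the upper half-plane is a holomorphic function of `q = exp (2πiz / h)` on
the unit disc, the puncture `q = 0` included. These are the functions to which Mathlib's
`qExpansion h` applies, without the modularity. -/
structure HasQExpansion (h : ℝ) (f : ℍ → ℂ) : Prop where
  periodic : Periodic (f ∘ ofComplex) h
  mdifferentiable : MDiff f
  isBoundedAtImInfty : IsBoundedAtImInfty f

variable {h : ℝ} {f : ℍ → ℂ}

namespace HasQExpansion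

lemma analyticAt_cuspFunction (hf : HasQExpansion h f) (hh : 0 < h) :
    AnalyticAt ℂ (cuspFunction h f) 0 :=
  analyticAt_cuspFunction_zero hh hf.periodic hf.mdifferentiable hf.isBoundedAtImInfty

lemma normalizedDeriv_eq_qParam (hf : HasQExpansion h f) (hh : 0 < h) (z : ℍ) :
    D f z = (h : ℂ)⁻¹ *
      (Periodic.qParam h z * deriv (cuspFunction h f) (Periodic.qParam h z)) := by
  have h_eq : f ∘ ofComplex = cuspFunction h f ∘ Periodic.qParam h :=
    funext fun w ↦ (Periodic.eq_cuspFunction hh.ne' hf.periodic w).symm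
  have h_qParam : HasDerivAt (Periodic.qParam h)
      (Periodic.qParam h z * (2 * Real.pi * I / h)) z := by
    simpa using! (((hasDerivAt_id (z : ℂ)).const_mul (2 * Real.pi * I)).div_const (h : ℂ)).cexp
  have h_cusp := (differentiableAt_cuspFunction hh hf.periodic hf.mdifferentiable
    hf.isBoundedAtImInfty (Periodic.norm_qParam_lt_one hh z.im_pos)).hasDerivAt
  have := two_pi_I_ne_zero
  rw [normalizedDerivOfComplex, h_eq, (h_cusp.comp _ h_qParam).deriv]
  field_simp

lemma continuousAt_mul_deriv_cuspFunction (hf : HasQExpansion h f) (hh : 0 < h) :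
    ContinuousAt (fun q ↦ (h : ℂ)⁻¹ * (q * deriv (cuspFunction h f) q)) 0 :=
  (analyticAt_const.mul (analyticAt_id.mul (hf.analyticAt_cuspFunction hh).deriv)).continuousAt

lemma isZeroAtImInfty_normalizedDeriv (hf : HasQExpansion h f) (hh : 0 < h) :
    IsZeroAtImInfty (D f) := by
  simpa [IsZeroAtImInfty, ZeroAtFilter] using tendsto_atImInfty_of_eq_qParam hh
    (hf.continuousAt_mul_deriv_cuspFunction hh) (hf.normalizedDeriv_eq_qParam hh)

lemma normalizedDeriv (hf : HasQExpansion h f) (hh : 0 < h) : HasQExpansion h (D f) where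
  periodic := periodic_comp_ofComplex_of_eq_qParam
    (G := fun q ↦ (h : ℂ)⁻¹ * (q * deriv (cuspFunction h f) q)) hh.ne'
    (hf.normalizedDeriv_eq_qParam hh)
  mdifferentiable := normalizedDerivOfComplex_mdifferentiable hf.mdifferentiable
  isBoundedAtImInfty := (hf.isZeroAtImInfty_normalizedDeriv hh).isBoundedAtImInfty

end HasQExpansion

lemma iteratedDeriv_id_mul_deriv_zero {c : ℂ → ℂ} (hc : AnalyticAt ℂ c 0) (n : ℕ) :
    iteratedDeriv n (fun q ↦ q * deriv c q) 0 = n * iteratedDeriv n c 0 := by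
  rw [show (fun q ↦ q * deriv c q) = id * deriv c from rfl,
    iteratedDeriv_mul analyticAt_id.contDiffAt hc.deriv.contDiffAt]
  rcases n with _ | n
  · simp
  · rw [Finset.sum_eq_single 1]
    · simp [iteratedDeriv_succ', iteratedDeriv_id]
    · intro i _ hi
      simp [iteratedDeriv_id, hi]
    · simp

/-- The Euler derivation `X d/dX` of formal power series, the formal counterpart of `D`. -/
def eulerDerivation (R : Type*) [CommRing R] : Derivation R R⟦X⟧ R⟦X⟧ :=
  (PowerSeries.X : R⟦X⟧) • PowerSeries.derivative R

lemma coeff_eulerDerivation {R : Type*} [CommRing R] (f : R⟦X⟧) (n : ℕ) :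
    (eulerDerivation R f).coeff n = n * f.coeff n := by
  rw [eulerDerivation, Derivation.smul_apply, smul_eq_mul]
  cases n with
  | zero => simp
  | succ n => rw [PowerSeries.coeff_succ_X_mul, PowerSeries.coeff_derivative, mul_comm,
      Nat.cast_succ]

lemma constantCoeff_eulerDerivation {R : Type*} [CommRing R] (f : R⟦X⟧) :
    constantCoeff (eulerDerivation R f) = 0 := by
  rw [← PowerSeries.coeff_zero_eq_constantCoeff_apply, coeff_eulerDerivation, Nat.cast_zero,
    zero_mul]

lemma eulerDerivation_map {R S : Type*} [CommRing R] [CommRing S] (φ : R →+* S) (f : R⟦X⟧) :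
    eulerDerivation S (f.map φ) = (eulerDerivation R f).map φ := by
  ext n
  simp [coeff_eulerDerivation]

lemma HasQExpansion.qExpansion_normalizedDeriv (hf : HasQExpansion h f) (hh : 0 < h) :
    qExpansion h (D f) = (h : ℂ)⁻¹ • eulerDerivation ℂ (qExpansion h f) := by
  ext n
  have h_eq := cuspFunction_eventuallyEq_of_eq_qParam hh
    (hf.continuousAt_mul_deriv_cuspFunction hh) (hf.normalizedDeriv_eq_qParam hh)
  rw [PowerSeries.coeff_smul, coeff_eulerDerivation, qExpansion_coeff, qExpansion_coeff,
    h_eq.iteratedDeriv_eq, iteratedDeriv_const_mul_field,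
    iteratedDeriv_id_mul_deriv_zero (hf.analyticAt_cuspFunction hh), smul_eq_mul]
  ring

end NormalizedDeriv

section RankinCohen

/-- The function `c / (2πi (cz + d))` on the upper half-plane attached to
`γ = (a, b; c, d) ∈ SL₂(ℤ)`, which measures the failure of `D` to commute with the slash action
of `γ`. -/
def slashDefect (γ : SL(2, ℤ)) (z : ℍ) : ℂ :=
  (2 * Real.pi * I)⁻¹ * (γ 1 0 / denom γ z)

lemma hasDerivAt_slashDefect (γ : SL(2, ℤ)) (z : ℍ) :
    HasDerivAt (slashDefect γ ∘ ofComplex)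
      (-(2 * Real.pi * I) * slashDefect γ z ^ 2) z := by
  have h_eq : slashDefect γ ∘ ofComplex =ᶠ[𝓝 (z : ℂ)]
      fun w ↦ (2 * Real.pi * I)⁻¹ * γ 1 0 * denom γ w ^ (-1 : ℤ) := by
    filter_upwards [isOpen_upperHalfPlaneSet.mem_nhds z.im_pos] with w hw
    simp [slashDefect, ofComplex_apply_of_im_pos hw, div_eq_mul_inv, mul_assoc]
  refine (((hasDerivAt_denom_zpow γ (-1) z).const_mul _).congr_of_eventuallyEq h_eq).congr_deriv ?_
  have hz := denom_ne_zero γ z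
  have := two_pi_I_ne_zero
  rw [show (-1 : ℤ) - 1 = -(2 : ℕ) by norm_num, zpow_neg, zpow_natCast, slashDefect]
  push_cast
  field_simp
  simp [sq]

lemma mdifferentiable_slashDefect (γ : SL(2, ℤ)) : MDiff (slashDefect γ) := fun z ↦
  mdifferentiableAt_iff.mpr (hasDerivAt_slashDefect γ z).differentiableAt

lemma normalizedDeriv_slashDefect (γ : SL(2, ℤ)) : D (slashDefect γ) = -slashDefect γ ^ 2 := by
  ext z
  have := two_pi_I_ne_zero
  rw [normalizedDerivOfComplex, (hasDerivAt_slashDefect γ z).deriv, Pi.neg_apply, Pi.pow_apply,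
    ← mul_assoc, mul_neg, inv_mul_cancel₀ this, neg_one_mul]

variable {k : ℤ} {F : ℍ → ℂ} {γ : SL(2, ℤ)}

lemma normalizedDeriv_slash_eq (hF : MDiff F) :
    (D F) ∣[k + 2] γ = D (F ∣[k] γ) + (k : ℂ) • (slashDefect γ * (F ∣[k] γ)) := by
  ext z
  simp only [normalizedDerivOfComplex_SL_slash hF, slashDefect, Pi.add_apply, Pi.sub_apply,
    Pi.smul_apply, Pi.mul_apply, smul_eq_mul]
  ring

lemma normalizedDeriv_normalizedDeriv_slash_eq (hF : MDiff F) (hγ : F ∣[k] γ = F) :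
    (D (D F)) ∣[k + 4] γ = D (D F) + (2 * k + 2 : ℂ) • (slashDefect γ * D F) +
      (k * (k + 1) : ℂ) • (slashDefect γ ^ 2 * F) := by
  have hDF := normalizedDerivOfComplex_mdifferentiable hF
  have hu := mdifferentiable_slashDefect γ
  rw [show k + 4 = k + 2 + 2 by ring, normalizedDeriv_slash_eq hDF, normalizedDeriv_slash_eq hF, hγ,
    normalizedDerivOfComplex_add _ _ hDF ((hu.mul hF).const_smul _),
    normalizedDerivOfComplex_smul _ _ (hu.mul hF), normalizedDerivOfComplex_mul _ _ hu hF,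
    normalizedDeriv_slashDefect]
  ext z
  simp only [Pi.add_apply, Pi.smul_apply, Pi.mul_apply, Pi.neg_apply, Pi.pow_apply, smul_eq_mul]
  push_cast
  ring

/-- The second Rankin–Cohen bracket of `F` with itself, normalized as `k F F'' - (k + 1) F'²` for
the derivation `D = (2πi)⁻¹ d/dz`. It maps forms of weight `k` to forms of weight `2k + 4`. -/
def rankinCohenBracketTwo (k : ℤ) (F : ℍ → ℂ) : ℍ → ℂ :=
  (k : ℂ) • (F * D (D F)) - (k + 1 : ℂ) • (D F * D F)

lemma rankinCohenBracketTwo_slash (hF : MDiff F) (hγ : F ∣[k] γ = F) :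
    rankinCohenBracketTwo k F ∣[2 * k + 4] γ = rankinCohenBracketTwo k F := by
  have h_mul : (F * D (D F)) ∣[2 * k + 4] γ = F * (D (D F) ∣[k + 4] γ) := by
    rw [show 2 * k + 4 = k + (k + 4) by ring, ModularForm.mul_slash_SL2, hγ]
  have h_sq : (D F * D F) ∣[2 * k + 4] γ = (D F ∣[k + 2] γ) * (D F ∣[k + 2] γ) := by
    rw [show 2 * k + 4 = (k + 2) + (k + 2) by ring, ModularForm.mul_slash_SL2]
  rw [rankinCohenBracketTwo, sub_eq_add_neg, SlashAction.add_slash, SlashAction.neg_slash,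
    ModularForm.SL_smul_slash, ModularForm.SL_smul_slash, h_mul, h_sq, normalizedDeriv_slash_eq hF,
    normalizedDeriv_normalizedDeriv_slash_eq hF hγ, hγ]
  ext z
  simp only [Pi.add_apply, Pi.smul_apply, Pi.mul_apply, Pi.neg_apply, Pi.pow_apply, smul_eq_mul]
  ring

lemma mdifferentiable_rankinCohenBracketTwo (hF : MDiff F) :
    MDiff (rankinCohenBracketTwo k F) := by
  have hDF := normalizedDerivOfComplex_mdifferentiable hF
  have hDDF := normalizedDerivOfComplex_mdifferentiable hDF
  exact ((hF.mul hDDF).const_smul _).sub ((hDF.mul hDF).const_smul _)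

lemma slash_eq_self (f : ModularForm 𝒮ℒ k) (γ : SL(2, ℤ)) : ⇑f ∣[k] γ = f :=
  SlashInvariantFormClass.slash_action_eq f (γ : GL (Fin 2) ℝ) ⟨γ, rfl⟩

lemma hasQExpansion_modularForm (f : ModularForm 𝒮ℒ k) : HasQExpansion 1 f where
  periodic := SlashInvariantFormClass.periodic_comp_ofComplex f one_mem_strictPeriods_SL
  mdifferentiable := ModularFormClass.holo f
  isBoundedAtImInfty := ModularFormClass.bdd_at_infty f

lemma HasQExpansion.isZeroAtImInfty_rankinCohenBracketTwo {h : ℝ} (hF : HasQExpansion h F)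
    (hh : 0 < h) : IsZeroAtImInfty (rankinCohenBracketTwo k F) := by
  have hDF := hF.isZeroAtImInfty_normalizedDeriv hh
  have hDDF := (hF.normalizedDeriv hh).isZeroAtImInfty_normalizedDeriv hh
  have h_mul : ZeroAtFilter atImInfty (F * D (D F)) := by
    rw [mul_comm]
    exact hDDF.mul_boundedAtFilter hF.isBoundedAtImInfty
  have h_sq : ZeroAtFilter atImInfty (D F * D F) := hDF.mul_boundedAtFilter hDF.isBoundedAtImInfty
  rw [rankinCohenBracketTwo, sub_eq_add_neg]
  exact (h_mul.smul _).add (h_sq.smul _).neg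

lemma HasQExpansion.qExpansion_rankinCohenBracketTwo (hF : HasQExpansion 1 F) :
    qExpansion 1 (rankinCohenBracketTwo k F) =
      (k : ℂ) • (qExpansion 1 F * eulerDerivation ℂ (eulerDerivation ℂ (qExpansion 1 F))) -
      (k + 1 : ℂ) • (eulerDerivation ℂ (qExpansion 1 F) * eulerDerivation ℂ (qExpansion 1 F)) := by
  have hDF := hF.normalizedDeriv one_pos
  have h₀ := hF.analyticAt_cuspFunction one_pos
  have h₁ := hDF.analyticAt_cuspFunction one_pos
  have h₂ := (hDF.normalizedDeriv one_pos).analyticAt_cuspFunction one_pos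
  have h_mul := cuspFunction_mul h₀.continuousAt h₂.continuousAt ▸ h₀.mul h₂
  have h_sq := cuspFunction_mul h₁.continuousAt h₁.continuousAt ▸ h₁.mul h₁
  rw [rankinCohenBracketTwo,
    qExpansion_sub (cuspFunction_smul h_mul.continuousAt _ ▸ h_mul.const_smul)
      (cuspFunction_smul h_sq.continuousAt _ ▸ h_sq.const_smul),
    qExpansion_smul h_mul, qExpansion_smul h_sq, qExpansion_mul h₀ h₂, qExpansion_mul h₁ h₁,
    hDF.qExpansion_normalizedDeriv one_pos, hF.qExpansion_normalizedDeriv one_pos]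
  simp only [ofReal_one, inv_one, one_smul]

/-- The second Rankin–Cohen bracket of a level one modular form with itself, as a cusp form. -/
def rankinCohenCuspForm (f : ModularForm 𝒮ℒ k) : CuspForm 𝒮ℒ (2 * k + 4) where
  toFun := rankinCohenBracketTwo k f
  slash_action_eq' γ hγ := by
    obtain ⟨γ, rfl⟩ := hγ
    exact rankinCohenBracketTwo_slash (ModularFormClass.holo f) (slash_eq_self f γ)
  holo' := mdifferentiable_rankinCohenBracketTwo (ModularFormClass.holo f)
  zero_at_cusps' hc := by
    rw [Subgroup.IsArithmetic.isCusp_iff_isCusp_SL2Z] at hc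
    rw [OnePoint.isZeroAt_iff_forall_SL2Z hc]
    intro γ _
    rw [rankinCohenBracketTwo_slash (ModularFormClass.holo f) (slash_eq_self f γ)]
    exact (hasQExpansion_modularForm f).isZeroAtImInfty_rankinCohenBracketTwo one_pos

end RankinCohen

section LocallyUniformLimits

variable {ι : Type*} {φ : Filter ι} {U : Set ℂ} {f : ℂ → ℂ}

lemma tendstoLocallyUniformlyOn_iteratedDeriv {F : ι → ℂ → ℂ} (hU : IsOpen U)
    (hF : ∀ᶠ i in φ, DifferentiableOn ℂ (F i) U) (hf : TendstoLocallyUniformlyOn F f φ U) (n : ℕ) :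
    TendstoLocallyUniformlyOn (fun i ↦ iteratedDeriv n (F i)) (iteratedDeriv n f) φ U := by
  induction n with
  | zero => simpa using hf
  | succ n ih =>
    simp only [iteratedDeriv_succ]
    refine ih.deriv (hF.mono fun i hi z hz ↦ ?_) hU
    rw [iteratedDeriv_eq_iterate]
    have h_analytic := (hi.analyticAt (hU.mem_nhds hz)).iterated_deriv n
    exact h_analytic.differentiableAt.differentiableWithinAt

lemma tendstoLocallyUniformlyOn_const (φ : Filter ι) (f : ℂ → ℂ) (U : Set ℂ) :
    TendstoLocallyUniformlyOn (fun _ : ι ↦ f) f φ U := fun _ hu _ _ ↦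
  ⟨U, self_mem_nhdsWithin, .of_forall fun _ _ _ ↦ refl_mem_uniformity hu⟩

lemma tendstoLocallyUniformlyOn_pow {F : ι → ℂ → ℂ} (hF : TendstoLocallyUniformlyOn F f φ U)
    (hf : ContinuousOn f U) (n : ℕ) :
    TendstoLocallyUniformlyOn (fun i ↦ F i ^ n) (f ^ n) φ U := by
  induction n with
  | zero =>
    simpa only [pow_zero] using tendstoLocallyUniformlyOn_const φ 1 U
  | succ n ih => simpa only [pow_succ] using! ih.mul₀ hF (hf.pow n) hf

lemma iteratedDeriv_polynomialEval_zero (P : Polynomial ℂ) (n : ℕ) :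
    iteratedDeriv n (fun q ↦ P.eval q) 0 = n.factorial * P.coeff n := by
  have h_iterate (m : ℕ) :
      iteratedDeriv m (fun q ↦ P.eval q) = fun q ↦ (Polynomial.derivative^[m] P).eval q := by
    induction m with
    | zero => simp
    | succ m ih =>
      ext q
      rw [iteratedDeriv_succ, ih, iterate_succ_apply', Polynomial.deriv]
  simp [h_iterate, ← Polynomial.coeff_zero_eq_eval_zero, Polynomial.coeff_iterate_derivative,
    Nat.descFactorial_self]

lemma inv_factorial_mul_iteratedDeriv_zero_of_tendsto_eval [φ.NeBot] (hU : IsOpen U) (h0 : 0 ∈ U)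
    {P : ι → Polynomial ℂ} (hP : TendstoLocallyUniformlyOn (fun i q ↦ (P i).eval q) f φ U)
    {n : ℕ} {c : ℂ} (hc : ∀ᶠ i in φ, (P i).coeff n = c) :
    (n.factorial : ℂ)⁻¹ * iteratedDeriv n f 0 = c := by
  have h_lim := (tendstoLocallyUniformlyOn_iteratedDeriv hU
    (.of_forall fun i ↦ (P i).differentiable.differentiableOn) hP n).tendsto_at h0
  simp only [iteratedDeriv_polynomialEval_zero] at h_lim
  have h_eq : iteratedDeriv n f 0 = n.factorial * c :=
    tendsto_nhds_unique h_lim (tendsto_const_nhds.congr' (hc.mono fun i hi ↦ by simp only [hi]))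
  rw [h_eq, inv_mul_cancel_left₀ (mod_cast n.factorial_ne_zero)]

end LocallyUniformLimits

section Tau

/-- The truncation `q ∏_{1 ≤ m ≤ N} (1 - q^m)²⁴` of the product defining `Δ`. -/
def truncatedDiscriminant (N : ℕ) : Polynomial ℤ :=
  Polynomial.X * ∏ m ∈ Finset.Icc 1 N, (1 - Polynomial.X ^ m) ^ 24

lemma X_pow_dvd_truncatedDiscriminant_succ_sub (N : ℕ) :
    Polynomial.X ^ (N + 1) ∣ truncatedDiscriminant (N + 1) - truncatedDiscriminant N := by
  have h_factor :
      (Polynomial.X : Polynomial ℤ) ^ (N + 1) ∣ (1 - Polynomial.X ^ (N + 1)) ^ 24 - 1 := by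
    have h_sub := sub_dvd_pow_sub_pow (1 - Polynomial.X ^ (N + 1) : Polynomial ℤ) 1 24
    rwa [one_pow, sub_sub_cancel_left, neg_dvd] at h_sub
  rw [truncatedDiscriminant, truncatedDiscriminant, Finset.prod_Icc_succ_top (by omega),
    ← mul_assoc, ← mul_sub_one]
  exact h_factor.mul_left _

lemma coeff_truncatedDiscriminant {n N : ℕ} (h : n ≤ N) :
    (truncatedDiscriminant N).coeff n = ramanujanTau n := by
  induction N, h using Nat.le_induction with
  | base => rfl
  | succ N hN ih =>
    rw [← ih, ← sub_eq_zero, ← Polynomial.coeff_sub]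
    exact Polynomial.X_pow_dvd_iff.mp (X_pow_dvd_truncatedDiscriminant_succ_sub N) n (by omega)

lemma tendstoLocallyUniformlyOn_truncatedDiscriminant :
    TendstoLocallyUniformlyOn
      (fun N q ↦ ((truncatedDiscriminant N).map (Int.castRingHom ℂ)).eval q)
      (fun q ↦ q * ∏' i : ℕ, (1 - q ^ (i + 1)) ^ 24) atTop (Metric.ball 0 1) := by
  have h_prod := ModularForm.multipliableLocallyUniformlyOn_one_sub_pow.hasProdLocallyUniformlyOn
    |>.tendstoLocallyUniformlyOn_finsetRange
  have h_cont := ModularForm.differentiableOn_tprod_one_sub_pow.continuousOn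
  have h_mul := (tendstoLocallyUniformlyOn_const atTop id (Metric.ball 0 1)).mul₀
    (tendstoLocallyUniformlyOn_pow h_prod h_cont 24) continuousOn_id (h_cont.pow 24)
  refine (h_mul.congr fun N q _ ↦ ?_).congr_right fun q hq ↦ ?_
  · have h_shift := Finset.prod_Ico_add' (fun m ↦ 1 - q ^ m) 0 N 1
    rw [zero_add, Finset.Ico_add_one_right_eq_Icc, ← Finset.range_eq_Ico] at h_shift
    simp [truncatedDiscriminant, Polynomial.map_prod, Polynomial.eval_prod, Finset.prod_pow,
      h_shift]
  · simp [(ModularForm.multipliable_one_sub_pow (by simpa using hq)).tprod_pow]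

lemma qExpansion_discriminant :
    qExpansion 1 ModularForm.discriminant =
      (PowerSeries.mk ramanujanTau).map (Int.castRingHom ℂ) := by
  ext n
  have h_eq : cuspFunction 1 ModularForm.discriminant =ᶠ[𝓝 0]
      fun q ↦ q * ∏' i : ℕ, (1 - q ^ (i + 1)) ^ 24 :=
    ModularForm.discriminant_cuspFunction_eqOn.eventuallyEq_of_mem (Metric.ball_mem_nhds 0 one_pos)
  have h_coeff : ∀ᶠ N in atTop, ((truncatedDiscriminant N).map (Int.castRingHom ℂ)).coeff n =
      (ramanujanTau n : ℂ) := by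
    filter_upwards [eventually_ge_atTop n] with N hN
    rw [Polynomial.coeff_map, coeff_truncatedDiscriminant hN, eq_intCast]
  rw [qExpansion_coeff, h_eq.iteratedDeriv_eq, PowerSeries.coeff_map, PowerSeries.coeff_mk,
    eq_intCast]
  exact inv_factorial_mul_iteratedDeriv_zero_of_tendsto_eval Metric.isOpen_ball
    (Metric.mem_ball_self one_pos) tendstoLocallyUniformlyOn_truncatedDiscriminant h_coeff

lemma eq_coeff_one_smul_of_map_eq_qExpansion (f : CuspForm 𝒮ℒ 12) {Q : ℤ⟦X⟧}
    (hQ : qExpansion 1 f = Q.map (Int.castRingHom ℂ)) :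
    Q = Q.coeff 1 • PowerSeries.mk ramanujanTau := by
  obtain ⟨c, rfl⟩ := CuspForm.exists_smul_discriminant_of_weight_eq_twelve f
  have h_smul : c • qExpansion 1 ModularForm.discriminant = Q.map (Int.castRingHom ℂ) :=
    hQ ▸ (ModularForm.qExpansion_smul one_pos one_mem_strictPeriods_SL c CuspForm.discriminant).symm
  have h_coeff (n : ℕ) : c * ramanujanTau n = Q.coeff n := by
    simpa [qExpansion_discriminant] using congrArg (PowerSeries.coeff n) h_smul
  have h_one : c = Q.coeff 1 := by
    simpa [discriminant_qExpansion_coeff_one] using congrArg (PowerSeries.coeff 1) h_smul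
  ext n
  have h_n := h_coeff n
  rw [h_one] at h_n
  rw [map_zsmul, PowerSeries.coeff_mk, smul_eq_mul]
  exact_mod_cast h_n.symm

end Tau

section VanDerPol

/-- The generating series `∑ σ_k(n) qⁿ` of the divisor sums. -/
def sigmaSeries (k : ℕ) : ℤ⟦X⟧ :=
  .mk fun n ↦ (σ k n : ℤ)

lemma qExpansion_E₄ :
    qExpansion 1 E₄ = (1 + (240 : ℤ) • sigmaSeries 3).map (Int.castRingHom ℂ) := by
  ext n
  have h_bernoulli : bernoulli 4 = -1 / 30 := by decide +kernel
  rw [EisensteinSeries.E_qExpansion_coeff _ ⟨2, rfl⟩, h_bernoulli]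
  simp only [sigmaSeries, PowerSeries.coeff_map, map_add, map_zsmul, PowerSeries.coeff_mk,
    PowerSeries.coeff_one]
  split_ifs with hn
  · simp [hn]
  · norm_num

/-- The right-hand side of van der Pol's identity for `Δ`. -/
def vanDerPolSeries : ℤ⟦X⟧ :=
  eulerDerivation ℤ (eulerDerivation ℤ (sigmaSeries 3)) +
    (60 : ℤ) • ((4 : ℤ) • (sigmaSeries 3 * eulerDerivation ℤ (eulerDerivation ℤ (sigmaSeries 3))) -
      (5 : ℤ) • (eulerDerivation ℤ (sigmaSeries 3) * eulerDerivation ℤ (sigmaSeries 3)))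

lemma coeff_one_vanDerPolSeries : vanDerPolSeries.coeff 1 = 1 := by
  have h_zero : constantCoeff (sigmaSeries 3) = 0 := by
    simp [sigmaSeries, ← PowerSeries.coeff_zero_eq_constantCoeff_apply]
  simp only [vanDerPolSeries, map_add, map_sub, map_zsmul, PowerSeries.coeff_one_mul,
    coeff_eulerDerivation, constantCoeff_eulerDerivation, h_zero]
  simp [sigmaSeries]

lemma rankinCohenBracket_one_add_sigmaSeries {P : ℤ⟦X⟧} (hP : P = 1 + (240 : ℤ) • sigmaSeries 3) :
    (4 : ℤ) • (P * eulerDerivation ℤ (eulerDerivation ℤ P)) -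
      (5 : ℤ) • (eulerDerivation ℤ P * eulerDerivation ℤ P) = (960 : ℤ) • vanDerPolSeries := by
  have h_deriv : eulerDerivation ℤ P = (240 : ℤ) • eulerDerivation ℤ (sigmaSeries 3) := by
    rw [hP, map_add, Derivation.map_one_eq_zero, zero_add, map_zsmul]
  rw [h_deriv, map_zsmul, hP, vanDerPolSeries]
  simp only [zsmul_eq_mul]
  push_cast
  ring

lemma qExpansion_rankinCohenCuspForm_E₄ :
    qExpansion 1 (rankinCohenCuspForm E₄) =
      ((960 : ℤ) • vanDerPolSeries).map (Int.castRingHom ℂ) := by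
  have h_bracket := (hasQExpansion_modularForm E₄).qExpansion_rankinCohenBracketTwo (k := 4)
  rw [qExpansion_E₄, eulerDerivation_map, eulerDerivation_map] at h_bracket
  refine h_bracket.trans ?_
  rw [← rankinCohenBracket_one_add_sigmaSeries rfl, map_sub, map_zsmul, map_zsmul, map_mul, map_mul,
    ← Int.cast_smul_eq_zsmul ℂ (4 : ℤ) (_ * _), ← Int.cast_smul_eq_zsmul ℂ (5 : ℤ) (_ * _)]
  norm_num

lemma vanDerPolSeries_eq : vanDerPolSeries = PowerSeries.mk ramanujanTau := by
  have h := eq_coeff_one_smul_of_map_eq_qExpansion (rankinCohenCuspForm E₄)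
    qExpansion_rankinCohenCuspForm_E₄
  rw [map_zsmul, coeff_one_vanDerPolSeries, smul_eq_mul, mul_one] at h
  ext n
  have h_n := congrArg (PowerSeries.coeff n) h
  rw [map_zsmul, map_zsmul] at h_n
  exact mul_left_cancel₀ (by norm_num) h_n

lemma ramanujanTau_modEq (n : ℕ) : ramanujanTau n ≡ n ^ 2 * σ 3 n [ZMOD 60] := by
  have h := congrArg (PowerSeries.coeff n) vanDerPolSeries_eq
  rw [PowerSeries.coeff_mk, vanDerPolSeries, map_add, map_zsmul,
    coeff_eulerDerivation, coeff_eulerDerivation, sigmaSeries, PowerSeries.coeff_mk] at h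
  rw [← h, ← mul_assoc, ← sq, smul_eq_mul]
  exact Int.add_mul_emod_self_left _ _ _

end VanDerPol

section Congruence

lemma sum_divisors_div_pow_mul_pow_add (i j n : ℕ) :
    ∑ d ∈ n.divisors, (n / d) ^ i * d ^ (i + j) = n ^ i * σ j n := by
  rw [ArithmeticFunction.sigma_apply, Finset.mul_sum]
  refine Finset.sum_congr rfl fun d hd ↦ ?_
  rw [pow_add, ← mul_assoc, ← mul_pow, Nat.div_mul_cancel (Nat.dvd_of_mem_divisors hd)]

lemma sum_divisors_div_pow_mul_pow_comm (i j n : ℕ) :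
    ∑ d ∈ n.divisors, (n / d) ^ i * d ^ j = ∑ d ∈ n.divisors, (n / d) ^ j * d ^ i := by
  rw [← Nat.sum_div_divisors]
  refine Finset.sum_congr rfl fun d hd ↦ ?_
  rw [Nat.div_div_self (Nat.dvd_of_mem_divisors hd) (Nat.ne_zero_of_mem_divisors hd), mul_comm]

lemma sum_divisors_div_mul_sq (n : ℕ) : ∑ d ∈ n.divisors, (n / d) * d ^ 2 = n * σ 1 n := by
  simpa only [pow_one] using sum_divisors_div_pow_mul_pow_add 1 1 n

lemma sum_divisors_div_sq_mul (n : ℕ) : ∑ d ∈ n.divisors, (n / d) ^ 2 * d = n * σ 1 n := by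
  simpa only [pow_one, sum_divisors_div_mul_sq] using sum_divisors_div_pow_mul_pow_comm 2 1 n

variable {p : ℕ} [Fact p.Prime]

lemma zmod_pow_eq_pow_of_modEq {r s : ℕ} (h : r ≡ s [MOD p - 1]) (hr : r ≠ 0) (hs : s ≠ 0)
    (x : ZMod p) : x ^ r = x ^ s := by
  rcases eq_or_ne x 0 with rfl | hx
  · rw [zero_pow hr, zero_pow hs]
  · exact pow_eq_pow_of_modEq h (ZMod.pow_card_sub_one_eq_one hx)

lemma sum_divisors_congr_of_modEq {r s : ℕ} (h : r ≡ s [MOD p - 1]) (hr : r ≠ 0) (hs : s ≠ 0)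
    (i n : ℕ) :
    ((∑ d ∈ n.divisors, (n / d) ^ i * d ^ r : ℕ) : ZMod p) =
      (∑ d ∈ n.divisors, (n / d) ^ i * d ^ s : ℕ) := by
  simp only [Nat.cast_sum, Nat.cast_mul, Nat.cast_pow, zmod_pow_eq_pow_of_modEq h hr hs]

lemma sub_one_dvd_four_of_dvd_thirty (hp : p ∣ 30) : p - 1 ∣ 4 := by
  have hp' : p.Prime := Fact.out
  rw [show 30 = 2 * 3 * 5 from rfl, hp'.dvd_mul, hp'.dvd_mul,
    Nat.prime_dvd_prime_iff_eq hp' Nat.prime_two, Nat.prime_dvd_prime_iff_eq hp' Nat.prime_three,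
    Nat.prime_dvd_prime_iff_eq hp' Nat.prime_five] at hp
  rcases hp with (rfl | rfl) | rfl <;> norm_num

lemma ramanujanTau_eq_mul_sigma_one (hp : p ∣ 30) (n : ℕ) :
    (ramanujanTau n : ZMod p) = (n * σ 1 n : ℕ) := by
  have h_tau : (ramanujanTau n : ZMod p) = (n ^ 2 * σ 3 n : ℕ) := by
    have h_dvd : (p : ℤ) ∣ 60 := Int.natCast_dvd_natCast.mpr (hp.trans (by norm_num))
    exact_mod_cast (ZMod.intCast_eq_intCast_iff _ _ _).mpr ((ramanujanTau_modEq n).of_dvd h_dvd)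
  have h_modEq : 5 ≡ 1 [MOD p - 1] :=
    ((Nat.modEq_iff_dvd' (by norm_num)).mpr (sub_one_dvd_four_of_dvd_thirty hp)).symm
  rw [h_tau, ← sum_divisors_div_pow_mul_pow_add,
    sum_divisors_congr_of_modEq h_modEq (by norm_num) one_ne_zero]
  simp only [pow_one, sum_divisors_div_sq_mul]

lemma toZMod_eisCoeff {ω : ℤ → ℤ_[p]} (hω : ∀ m : ℤ, PadicInt.toZMod (ω m) = (m : ZMod p))
    (k a b n : ℕ) :
    PadicInt.toZMod (eisCoeff p ω k a b n) =
      (∑ d ∈ n.divisors, (n / d) ^ a * d ^ (b + (k - 1)) : ℕ) := by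
  simp only [eisCoeff, map_sum, map_mul, map_pow, map_natCast, hω, Int.cast_natCast, Nat.cast_sum,
    Nat.cast_mul, Nat.cast_pow, pow_add, mul_assoc]

lemma toZMod_eisCoeff_eq_mul_sigma_one {ω : ℤ → ℤ_[p]}
    (hω : ∀ m : ℤ, PadicInt.toZMod (ω m) = (m : ZMod p)) {k a b : ℕ} (hk : 1 ≤ k) (hbk : 2 ≤ b + k)
    (hab : (a = 1 ∧ b + k ≡ 3 [MOD p - 1]) ∨ (a = 2 ∧ b + k ≡ 2 [MOD p - 1])) (n : ℕ) :
    PadicInt.toZMod (eisCoeff p ω k a b n) = (n * σ 1 n : ℕ) := by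
  have h_exp : b + (k - 1) + 1 = b + k := by omega
  have h_ne : b + (k - 1) ≠ 0 := by omega
  rw [toZMod_eisCoeff hω]
  rcases hab with ⟨rfl, h⟩ | ⟨rfl, h⟩ <;> rw [← h_exp] at h
  · rw [sum_divisors_congr_of_modEq (Nat.ModEq.add_right_cancel' 1 h) h_ne two_ne_zero]
    simp only [pow_one, sum_divisors_div_mul_sq]
  · rw [sum_divisors_congr_of_modEq (Nat.ModEq.add_right_cancel' 1 h) h_ne one_ne_zero]
    simp only [pow_one, sum_divisors_div_sq_mul]

end Congruence

theorem tau_congruent_eisenstein_three_five_general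
    (p : ℕ) [Fact p.Prime] (hp : p ∣ 30)
    (ω : ℤ → ℤ_[p])
    (hω_cong : ∀ m : ℤ, PadicInt.toZMod (ω m) = (m : ZMod p))
    (k a b : ℕ) (hk : 1 ≤ k) (hbk : 2 ≤ b + k)
    (hab : (a = 1 ∧ b + k ≡ 3 [MOD p - 1]) ∨ (a = 2 ∧ b + k ≡ 2 [MOD p - 1])) :
    ∀ n : ℕ, ((ramanujanTau n : ℤ) : ZMod p) = PadicInt.toZMod (eisCoeff p ω k a b n) := fun n ↦
  (ramanujanTau_eq_mul_sigma_one hp n).trans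
    (toZMod_eisCoeff_eq_mul_sigma_one hω_cong hk hbk hab n).symm

end

/-- Theorem 3.3 (first half): for `p ∈ {3, 5}`, if `a = 1` and `b + k ≡ 3 (mod p-1)`, or
`a = 2` and `b + k ≡ 2 (mod p-1)`, then `τ(n) ≡ c_{k,a,b,n} (mod p)` for all `n ≥ 0`.
Here `ω` is the Teichmüller character mod `p`, characterized by `ω(m) ≡ m (mod p)` together
with its values being Teichmüller representatives (`ω(m)^p = ω(m)`). -/
theorem tau_congruent_eisenstein_three_five
    (p : ℕ) [Fact p.Prime] (hp : p = 3 ∨ p = 5)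
    (ω : ℤ → ℤ_[p])
    (hω_cong : ∀ m : ℤ, PadicInt.toZMod (ω m) = (m : ZMod p))
    (hω_teich : ∀ m : ℤ, ω m ^ p = ω m)
    (k a b : ℕ) (hk : 2 ≤ k) (ha : a ≤ p - 1) (hb : b ≤ p - 1)
    (hab : (a = 1 ∧ b + k ≡ 3 [MOD p - 1]) ∨ (a = 2 ∧ b + k ≡ 2 [MOD p - 1])) :
    ∀ n : ℕ, ((ramanujanTau n : ℤ) : ZMod p) = PadicInt.toZMod (eisCoeff p ω k a b n) :=
  tau_congruent_eisenstein_three_five_general p (by rcases hp with rfl | rfl <;> norm_num) ω hω_cong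
    k a b (by omega) (by omega) hab
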